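/- Let Ω ⊆ ℂ be open and k > 0 a noninteger real number. Suppose f : Ω → ℝ is continuously differentiable, g ∈ C^k_loc(Ω,ℝ), the restriction of f to Ω ∖ ℝ is twice continuously differentiable, and Δf = g on Ω ∖ ℝ. Then f ∈ C^{k+2}_loc(Ω,ℝ); in particular f is twice continuously differentiable on all of Ω and Δf = g everywhere on Ω. -/

import Mathlib

/-!
The statement is local and is reduced to the first-order equation satisfied by the gradient. Put
`∂ f = ∂f/∂σ - i ∂f/∂t` (`grd f`) and `dbar = ∂/∂σ + i ∂/∂t`. Since `f` is `C¹`, `∂ f` is continuous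
on `Ω`, and off the real axis it is `C¹` with `dbar (∂ f) = Δf = g`.

Near a point of `Ω` choose a solution `W` of `dbar W = g` with one more derivative than `g`
(`exists_dbar_solution`). Then `∂ f - W` is continuous and holomorphic off the real axis, hence
holomorphic across it (`differentiableOn_of_off_realAxis`, by Morera's theorem). So `∂ f` is the sum
of a smooth function and `W`; the partial derivatives of `f` gain one derivative over `g`, `f` gains
two, and the real part of `dbar (∂ f) = g` is the Poisson equation on all of `Ω`.

The solution `W` is a multiple of the Cauchy transform of `χ g` with a cutoff `χ`. The analytic core is
that the Cauchy transform of a compactly supported `α`-Hölder density, `0 < α < 1`, is `C^{1+α}`. This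
is shown through a Taylor expansion with remainder `O(|h|^{1+α})` uniform in the base point
(`cau_taylor`), which yields both the Hölder bound on the derivative (`holAt_of_taylor`) and the
equation for `dbar`. Subtracting a multiple of a fixed smooth bump makes the density vanish to order
`α` at the base point, and the remainder is then controlled by `∫ |s|^{α-2} |h+s|⁻¹ ds = O(|h|^{α-1})`
(`rker_bound`). Higher orders follow because convolution commutes with derivatives (`cau_holC`).

Regularity is handled through the recursive predicate `HolC`, which is equivalent, locally, to the
description by families of partial derivatives (`MemCkC.holC`, `HolC.memCkC`).
-/


open Filter Topology

noncomputable section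

/-- The two coordinate directions `σ`, `t` in `ℂ = ℝ²`. -/
def cdir : Fin 2 → ℂ := ![1, Complex.I]

/-- The real axis inside `ℂ`. -/
def realAxis : Set ℂ := {z : ℂ | z.im = 0}

/-- `f` has partial derivative `L` at `s` in the direction `v ∈ ℂ`, as a limit of
difference quotients. -/
def HasPartialAtC (f : ℂ → ℝ) (v : ℂ) (s : ℂ) (L : ℝ) : Prop :=
  Filter.Tendsto (fun h : ℝ => h⁻¹ • (f (s + h • v) - f s)) (𝓝[≠] (0:ℝ)) (𝓝 L)

/-- `D` is a family of iterated partial derivatives of `D []` on `Ω`, up to order `⌊k⌋`. -/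
def IsPartialFamilyC (Ω : Set ℂ) (k : ℝ) (D : List (Fin 2) → ℂ → ℝ) : Prop :=
  ∀ l : List (Fin 2), l.length < ⌊k⌋₊ → ∀ i : Fin 2, ∀ s ∈ Ω,
    HasPartialAtC (D l) (cdir i) s (D (i :: l) s)

/-- `g ∈ C^k(Ω, ℝ)`: bounded partials up to order `⌊k⌋`, all `{k}`-Hölder. -/
def MemCkC (Ω : Set ℂ) (k : ℝ) (g : ℂ → ℝ) : Prop :=
  ∃ D : List (Fin 2) → ℂ → ℝ, D [] = g ∧ IsPartialFamilyC Ω k D ∧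
    ∃ B : ℝ, ∀ l : List (Fin 2), l.length ≤ ⌊k⌋₊ →
      (∀ s ∈ Ω, |D l s| ≤ B) ∧
      (∀ s ∈ Ω, ∀ t ∈ Ω, |D l s - D l t| ≤ B * dist s t ^ (k - ⌊k⌋₊))

/-- `g ∈ C^k_loc(Ω, ℝ)`: `C^k` on a neighborhood of each point of `Ω`. -/
def MemCkLocC (Ω : Set ℂ) (k : ℝ) (g : ℂ → ℝ) : Prop :=
  ∀ z ∈ Ω, ∃ U : Set ℂ, IsOpen U ∧ z ∈ U ∧ U ⊆ Ω ∧ MemCkC U k g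

/-- The Laplacian `Δf = ∂²f/∂σ² + ∂²f/∂t²` of `f : ℂ → ℝ`. -/
def lapl (f : ℂ → ℝ) (z : ℂ) : ℝ :=
  fderiv ℝ (fun w => fderiv ℝ f w 1) z 1 +
    fderiv ℝ (fun w => fderiv ℝ f w Complex.I) z Complex.I

/-! ### Local Hölder regularity -/

section

variable {E F : Type*} [NormedAddCommGroup E] [NormedSpace ℝ E]
  [NormedAddCommGroup F] [NormedSpace ℝ F]

/-- `φ` is `α`-Hölder on some neighbourhood of `z`, written as an `O` bound along `𝓝 (z, z)` so that
sums and products follow from the calculus of `=O`. -/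
def HolAt (α : ℝ) (φ : ℂ → E) (z : ℂ) : Prop :=
  (fun p : ℂ × ℂ => φ p.1 - φ p.2) =O[𝓝 (z, z)] fun p => dist p.1 p.2 ^ α

/-- The partial derivative of `φ` in the `i`-th coordinate direction, read off the real Fréchet
derivative; it is meaningful only where `φ` is differentiable. -/
def pd (i : Fin 2) (φ : ℂ → E) (z : ℂ) : E := fderiv ℝ φ z (cdir i)

/-- Local `C^{n+α}` regularity on `U`, by recursion on `n`: `φ` is differentiable at the points of `U`
and its two partial derivatives are locally `C^{n-1+α}`; for `n = 0`, `φ` is `α`-Hölder near each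
point of `U`. -/
def HolC (α : ℝ) (U : Set ℂ) : ℕ → (ℂ → E) → Prop
  | 0, φ => ∀ z ∈ U, HolAt α φ z
  | n + 1, φ => (∀ z ∈ U, DifferentiableAt ℝ φ z) ∧ ∀ i, HolC α U n (pd i φ)

lemma HolAt.congr {α : ℝ} {φ ψ : ℂ → E} {z : ℂ} (h : HolAt α φ z) (he : φ =ᶠ[𝓝 z] ψ) :
    HolAt α ψ z := by
  refine Asymptotics.IsBigO.congr' h ?_ EventuallyEq.rfl
  rw [nhds_prod_eq]
  filter_upwards [he.prod_mk he] with p hp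
  simp [hp.1, hp.2]

lemma HolAt.add {α : ℝ} {φ ψ : ℂ → E} {z : ℂ} (h : HolAt α φ z) (h' : HolAt α ψ z) :
    HolAt α (fun z => φ z + ψ z) z := by
  refine (Asymptotics.IsBigO.add h h').congr_left fun p => ?_
  exact add_sub_add_comm _ _ _ _ |>.symm

lemma HolAt.clm {α : ℝ} {φ : ℂ → E} {z : ℂ} (A : E →L[ℝ] F) (h : HolAt α φ z) :
    HolAt α (fun z => A (φ z)) z := by
  refine ((A.isBigO_comp _ _).trans h).congr_left fun p => ?_
  simp

lemma HolAt.continuousAt {α : ℝ} (hα : 0 < α) {φ : ℂ → E} {z : ℂ} (h : HolAt α φ z) :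
    ContinuousAt φ z := by
  have h1 : Tendsto (fun w : ℂ => (w, z)) (𝓝 z) (𝓝 (z, z)) := by
    have : ContinuousAt (fun w : ℂ => (w, z)) z := by fun_prop
    exact this
  have h2 := Asymptotics.IsBigO.comp_tendsto h h1
  have h3 : Tendsto (fun w : ℂ => dist w z ^ α) (𝓝 z) (𝓝 0) := by
    have : ContinuousAt (fun w : ℂ => dist w z ^ α) z :=
      ContinuousAt.rpow_const (by fun_prop) (Or.inr hα.le)
    have h4 : Tendsto (fun w : ℂ => dist w z ^ α) (𝓝 z) (𝓝 (dist z z ^ α)) := this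
    simpa [Real.zero_rpow hα.ne'] using h4
  exact tendsto_sub_nhds_zero_iff.1 (h2.trans_tendsto h3)

lemma LipschitzOnWith.holAt {α : ℝ} (hα1 : α ≤ 1) {φ : ℂ → E} {z : ℂ} {K : NNReal}
    {t : Set ℂ} (ht : t ∈ 𝓝 z) (h : LipschitzOnWith K φ t) : HolAt α φ z := by
  refine Asymptotics.IsBigO.of_bound K ?_
  have hball : Metric.ball z (1/2) ∈ 𝓝 z := Metric.ball_mem_nhds _ (by norm_num)
  rw [nhds_prod_eq]
  filter_upwards [prod_mem_prod (inter_mem ht hball) (inter_mem ht hball)] with p hp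
  have h1 := h.dist_le_mul p.1 hp.1.1 p.2 hp.2.1
  rw [dist_eq_norm] at h1
  refine h1.trans ?_
  have h2 : dist p.1 p.2 ≤ 1 := by
    have ha := hp.1.2
    have hb := hp.2.2
    rw [Metric.mem_ball] at ha hb
    linarith [dist_triangle_right p.1 p.2 z]
  rw [Real.norm_of_nonneg (by positivity)]
  gcongr
  rcases eq_or_lt_of_le (dist_nonneg (x := p.1) (y := p.2)) with h0 | h0
  · rw [← h0]; positivity
  · exact Real.self_le_rpow_of_le_one dist_nonneg h2 hα1

lemma ContDiffAt.holAt {α : ℝ} (hα1 : α ≤ 1) {φ : ℂ → E} {z : ℂ}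
    (h : ContDiffAt ℝ 1 φ z) : HolAt α φ z := by
  obtain ⟨K, t, ht, hK⟩ := h.exists_lipschitzOnWith
  exact LipschitzOnWith.holAt hα1 ht hK

lemma pd_congr {φ ψ : ℂ → E} {z : ℂ} (he : φ =ᶠ[𝓝 z] ψ) (i : Fin 2) : pd i φ z = pd i ψ z := by
  simp [pd, he.fderiv_eq]

lemma HolC.congr {α : ℝ} {U : Set ℂ} (hU : IsOpen U) {n : ℕ} : ∀ {φ ψ : ℂ → E},
    HolC α U n φ → (∀ z ∈ U, φ z = ψ z) → HolC α U n ψ := by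
  induction n with
  | zero =>
    intro φ ψ h he z hz
    exact (h z hz).congr (Filter.eventuallyEq_of_mem (hU.mem_nhds hz) he)
  | succ n ih =>
    intro φ ψ h he
    have he' : ∀ z ∈ U, φ =ᶠ[𝓝 z] ψ := fun z hz =>
      Filter.eventuallyEq_of_mem (hU.mem_nhds hz) he
    exact ⟨fun z hz => (h.1 z hz).congr_of_eventuallyEq (he' z hz).symm,
      fun i => ih (h.2 i) fun z hz => pd_congr (he' z hz) i⟩

lemma HolC.mono {α : ℝ} {U V : Set ℂ} (hVU : V ⊆ U) {n : ℕ} : ∀ {φ : ℂ → E},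
    HolC α U n φ → HolC α V n φ := by
  induction n with
  | zero => exact fun h z hz => h z (hVU hz)
  | succ n ih => exact fun h => ⟨fun z hz => h.1 z (hVU hz), fun i => ih (h.2 i)⟩

lemma HolC.of_nhds {α : ℝ} {U : Set ℂ} {n : ℕ} : ∀ {φ : ℂ → E},
    (∀ z ∈ U, ∃ V, z ∈ V ∧ HolC α V n φ) → HolC α U n φ := by
  induction n with
  | zero =>
    intro φ h z hz
    obtain ⟨V, hzV, hV⟩ := h z hz
    exact hV z hzV
  | succ n ih =>
    intro φ h
    refine ⟨fun z hz => ?_, fun i => ih fun z hz => ?_⟩ <;> obtain ⟨V, hzV, hV⟩ := h z hz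
    · exact hV.1 z hzV
    · exact ⟨V, hzV, hV.2 i⟩

lemma HolC.add {α : ℝ} {U : Set ℂ} (hU : IsOpen U) {n : ℕ} : ∀ {φ ψ : ℂ → E},
    HolC α U n φ → HolC α U n ψ → HolC α U n (fun z => φ z + ψ z) := by
  induction n with
  | zero => exact fun h h' z hz => (h z hz).add (h' z hz)
  | succ n ih =>
    refine fun h h' => ⟨fun z hz => (h.1 z hz).add (h'.1 z hz), fun i => ?_⟩
    refine (ih (h.2 i) (h'.2 i)).congr hU fun z hz => ?_
    simp [pd, fderiv_fun_add (h.1 z hz) (h'.1 z hz)]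

lemma HolC.clm {α : ℝ} {U : Set ℂ} (hU : IsOpen U) (A : E →L[ℝ] F) {n : ℕ} : ∀ {φ : ℂ → E},
    HolC α U n φ → HolC α U n (fun z => A (φ z)) := by
  induction n with
  | zero => exact fun h z hz => (h z hz).clm A
  | succ n ih =>
    refine fun h => ⟨fun z hz => A.differentiableAt.comp z (h.1 z hz), fun i => ?_⟩
    refine (ih (h.2 i)).congr hU fun z hz => ?_
    have := (A.hasFDerivAt.comp z (h.1 z hz).hasFDerivAt).fderiv
    simp only [Function.comp_def] at this
    simp [pd, this]

/-- A real-linear map on `ℂ` in terms of its values on the coordinate directions. -/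
lemma clm_eq_pd (A : ℂ →L[ℝ] E) :
    A = Complex.reCLM.smulRight (A (cdir 0)) + Complex.imCLM.smulRight (A (cdir 1)) := by
  ext z
  have hz : z = z.re • (cdir 0) + z.im • (cdir 1) := by
    simp [cdir, Complex.re_add_im]
  conv_lhs => rw [hz]
  simp only [map_add, map_smul]
  simp

lemma HolC.contDiffOn {α : ℝ} (hα : 0 < α) {U : Set ℂ} (hU : IsOpen U) {n : ℕ} : ∀ {φ : ℂ → E},
    HolC α U n φ → ContDiffOn ℝ n φ U := by
  induction n with
  | zero =>
    intro φ h
    exact contDiffOn_zero.2 fun z hz => ((h z hz).continuousAt hα).continuousWithinAt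
  | succ n ih =>
    intro φ h
    push_cast
    rw [contDiffOn_succ_iff_fderiv_of_isOpen hU]
    refine ⟨fun z hz => (h.1 z hz).differentiableWithinAt, by simp, ?_⟩
    have : fderiv ℝ φ = fun z => ContinuousLinearMap.smulRightL ℝ ℂ E Complex.reCLM (pd 0 φ z)
        + ContinuousLinearMap.smulRightL ℝ ℂ E Complex.imCLM (pd 1 φ z) := by
      funext z
      exact clm_eq_pd _
    rw [this]
    exact ((ContinuousLinearMap.contDiff _).comp_contDiffOn (ih (h.2 0))).add
      ((ContinuousLinearMap.contDiff _).comp_contDiffOn (ih (h.2 1)))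

lemma ContDiffOn.holC {α : ℝ} (hα1 : α ≤ 1) {U : Set ℂ} (hU : IsOpen U) {n : ℕ} :
    ∀ {φ : ℂ → E}, ContDiffOn ℝ (n + 1) φ U → HolC α U n φ := by
  induction n with
  | zero =>
    intro φ h z hz
    exact ContDiffAt.holAt hα1 (by simpa using h.contDiffAt (hU.mem_nhds hz))
  | succ n ih =>
    intro φ h
    rw [contDiffOn_succ_iff_fderiv_of_isOpen hU] at h
    refine ⟨fun z hz => (h.1 z hz).differentiableAt (hU.mem_nhds hz), fun i => ih ?_⟩
    exact ContDiffOn.clm_apply (by simpa using h.2.2) contDiffOn_const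

lemma HolC.pred {α : ℝ} (hα : 0 < α) (hα1 : α ≤ 1) {U : Set ℂ} (hU : IsOpen U) {n : ℕ}
    {φ : ℂ → E} (h : HolC α U (n + 1) φ) : HolC α U n φ :=
  ContDiffOn.holC hα1 hU (by simpa using h.contDiffOn hα hU)

lemma HolC.le {α : ℝ} (hα : 0 < α) (hα1 : α ≤ 1) {U : Set ℂ} (hU : IsOpen U) {n m : ℕ}
    {φ : ℂ → E} (h : HolC α U n φ) (hm : m ≤ n) : HolC α U m φ := by
  induction hm with
  | refl => exact h
  | step _ ih => exact ih (h.pred hα hα1 hU)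

end

/-! ### Comparison with families of partial derivatives -/

lemma HasPartialAtC.hasDerivAt_shift {φ : ℂ → ℝ} {v s : ℂ} {L : ℝ} (h : HasPartialAtC φ v s L) :
    HasDerivAt (fun t : ℝ => φ (s + t • v)) L 0 :=
  hasLineDerivAt_iff_tendsto_slope_zero.2 h

/-- Continuous partial derivatives on an open set give Fréchet differentiability. -/
lemma differentiableAt_of_partials {U : Set ℂ} (hU : IsOpen U) {φ : ℂ → ℝ} {ψ : Fin 2 → ℂ → ℝ}
    (h : ∀ i, ∀ z ∈ U, HasPartialAtC φ (cdir i) z (ψ i z)) (hψ : ∀ i, ContinuousOn (ψ i) U)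
    {z : ℂ} (hz : z ∈ U) : DifferentiableAt ℝ φ z := by
  set e := Complex.equivRealProdCLM.symm with he
  have hex : ∀ x y : ℝ, e (x, y) = x + y * Complex.I := fun x y => by
    rw [he, ContinuousLinearEquiv.symm_apply_eq]
    simp [Complex.equivRealProdCLM_apply]
  have hev : ∀ᶠ v in 𝓝 (z.re, z.im), e v ∈ U := by
    refine e.continuous.continuousAt.eventually_mem (hU.mem_nhds ?_)
    rw [hex, Complex.re_add_im]; exact hz
  have key := hasStrictFDerivAt_uncurry_coprod (𝕜 := ℝ) (u := (z.re, z.im))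
    (f := fun x y : ℝ => φ (e (x, y)))
    (f₁ := fun x y => ContinuousLinearMap.toSpanSingletonCLE (ψ 0 (e (x, y))))
    (f₂ := fun x y => ContinuousLinearMap.toSpanSingletonCLE (ψ 1 (e (x, y)))) ?_ ?_ ?_ ?_
  · have h1 : φ = (fun v : ℝ × ℝ => φ (e v)) ∘ Complex.equivRealProdCLM := by
      funext w
      simp only [Function.comp_apply, he, ContinuousLinearEquiv.symm_apply_apply]
    rw [h1]
    refine DifferentiableAt.comp z ?_ Complex.equivRealProdCLM.differentiableAt
    exact key.hasFDerivAt.differentiableAt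
  · filter_upwards [hev] with v hv
    have := (h 0 _ hv).hasDerivAt_shift
    rw [← sub_self v.1] at this
    have h2 := this.comp_sub_const v.1 v.1
    refine (h2.hasFDerivAt.congr_of_eventuallyEq (Eventually.of_forall fun x => ?_))
    simp only [hex]
    congr 1
    simp [cdir]; ring
  · filter_upwards [hev] with v hv
    have := (h 1 _ hv).hasDerivAt_shift
    rw [← sub_self v.2] at this
    have h2 := this.comp_sub_const v.2 v.2
    refine (h2.hasFDerivAt.congr_of_eventuallyEq (Eventually.of_forall fun x => ?_))
    simp only [hex]
    congr 1
    simp [cdir]; ring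
  all_goals
    refine ContinuousLinearEquiv.continuous _ |>.continuousAt.comp ?_
    refine ContinuousAt.comp (g := ψ _) (f := fun v : ℝ × ℝ => e v) ?_ e.continuous.continuousAt
    exact (hψ _).continuousAt (hU.mem_nhds hev.self_of_nhds)

lemma pd_eq_of_partial {φ : ℂ → ℝ} {i : Fin 2} {z : ℂ} {L : ℝ} (hd : DifferentiableAt ℝ φ z)
    (h : HasPartialAtC φ (cdir i) z L) : pd i φ z = L :=
  HasLineDerivAt.unique (hd.hasFDerivAt.hasLineDerivAt (cdir i)) h.hasDerivAt_shift

/-- The difference-quotient description of `C^k` implies the Fréchet one: the top partials are Hölder,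
hence continuous, so every lower one is differentiable. -/
lemma MemCkC.holC {U : Set ℂ} (hU : IsOpen U) {k : ℝ} (hα : 0 < k - ⌊k⌋₊) {g : ℂ → ℝ}
    (hg : MemCkC U k g) : HolC (k - ⌊k⌋₊) U ⌊k⌋₊ g := by
  obtain ⟨D, hD0, hD, B, hB⟩ := hg
  have hhol : ∀ l : List (Fin 2), l.length ≤ ⌊k⌋₊ → ∀ z ∈ U, HolAt (k - ⌊k⌋₊) (D l) z := by
    intro l hl z hz
    refine Asymptotics.IsBigO.of_bound B ?_
    rw [nhds_prod_eq]
    filter_upwards [prod_mem_prod (hU.mem_nhds hz) (hU.mem_nhds hz)] with p hp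
    rw [Real.norm_eq_abs, Real.norm_of_nonneg (by positivity)]
    exact (hB l hl).2 _ hp.1 _ hp.2
  have main : ∀ m : ℕ, ∀ l : List (Fin 2), l.length + m = ⌊k⌋₊ → HolC (k - ⌊k⌋₊) U m (D l) := by
    intro m
    induction m with
    | zero => exact fun l hl => hhol l hl.le
    | succ m ih =>
      intro l hl
      have hlt : l.length < ⌊k⌋₊ := by omega
      have hdiff : ∀ z ∈ U, DifferentiableAt ℝ (D l) z := fun z hz =>
        differentiableAt_of_partials hU (hD l hlt)
          (fun i w hw => ((hhol (i :: l) (by simpa using hlt) w hw).continuousAt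
            hα).continuousWithinAt) hz
      refine ⟨hdiff, fun i => (ih (i :: l) (by simp; omega)).congr hU fun z hz => ?_⟩
      exact (pd_eq_of_partial (hdiff z hz) (hD l hlt i z hz)).symm
  simpa [hD0] using main ⌊k⌋₊ [] (by simp)

/-- Conversely, local Hölder regularity gives uniform bounds near each point, because there are only
finitely many iterated partials of order at most `⌊k⌋`. -/
lemma HolC.memCkC {U : Set ℂ} (hU : IsOpen U) {k : ℝ} (hα : 0 < k - ⌊k⌋₊) (hα1 : k - ⌊k⌋₊ ≤ 1)
    {φ : ℂ → ℝ} (hφ : HolC (k - ⌊k⌋₊) U ⌊k⌋₊ φ) {z : ℂ} (hz : z ∈ U) :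
    ∃ V : Set ℂ, IsOpen V ∧ z ∈ V ∧ V ⊆ U ∧ MemCkC V k φ := by
  set α := k - ⌊k⌋₊ with hαdef
  set D : List (Fin 2) → ℂ → ℝ := fun l => l.foldr pd φ with hDdef
  have hD : ∀ l : List (Fin 2), l.length ≤ ⌊k⌋₊ → HolC α U (⌊k⌋₊ - l.length) (D l) := by
    intro l
    induction l with
    | nil => exact fun _ => hφ
    | cons i l ih =>
      intro hl
      have hl' : l.length + 1 ≤ ⌊k⌋₊ := by simpa using hl
      have h1 := ih (by omega)
      rw [show ⌊k⌋₊ - l.length = (⌊k⌋₊ - (i :: l).length) + 1 by simp; omega] at h1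
      exact h1.2 i
  have hD0 : ∀ l : List (Fin 2), l.length ≤ ⌊k⌋₊ → HolAt α (D l) z := fun l hl =>
    ((hD l hl).le hα hα1 hU (Nat.zero_le _) : HolC α U 0 (D l)) z hz
  have hbd : ∀ l : List (Fin 2), ∃ C : ℝ, l.length ≤ ⌊k⌋₊ → ∀ᶠ p : ℂ × ℂ in 𝓝 (z, z),
      |D l p.1| ≤ C ∧ |D l p.1 - D l p.2| ≤ C * dist p.1 p.2 ^ α := by
    intro l
    by_cases hl : l.length ≤ ⌊k⌋₊
    · obtain ⟨C, hC⟩ := (hD0 l hl).bound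
      refine ⟨max C (|D l z| + 1), fun _ => ?_⟩
      have hcont : ContinuousAt (fun p : ℂ × ℂ => |D l p.1|) (z, z) :=
        (ContinuousAt.comp (g := D l) (f := Prod.fst) ((hD0 l hl).continuousAt hα)
          continuousAt_fst).abs
      filter_upwards [hC, hcont.eventually_lt_const (lt_add_one |D l z|)] with p hp hp'
      refine ⟨hp'.le.trans (le_max_right _ _), ?_⟩
      rw [Real.norm_eq_abs, Real.norm_of_nonneg (by positivity)] at hp
      exact hp.trans (by gcongr; exact le_max_left _ _)
    · exact ⟨0, fun h => absurd h hl⟩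
  choose C hC using hbd
  have hfin : {l : List (Fin 2) | l.length ≤ ⌊k⌋₊}.Finite := List.finite_length_le _ _
  obtain ⟨B, hB⟩ := (hfin.image C).bddAbove
  have hev := (eventually_all_finite hfin).2 fun l hl => hC l hl
  rw [nhds_prod_eq, (Metric.nhds_basis_ball.prod_self).eventually_iff] at hev
  obtain ⟨r, hr, hev⟩ := hev
  obtain ⟨r', hr', hrU⟩ := Metric.isOpen_iff.1 hU z hz
  have hsub : Metric.ball z (min r r') ⊆ U :=
    (Metric.ball_subset_ball (min_le_right _ _)).trans hrU
  have hsub' : Metric.ball z (min r r') ⊆ Metric.ball z r :=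
    Metric.ball_subset_ball (min_le_left _ _)
  refine ⟨Metric.ball z (min r r'), Metric.isOpen_ball, Metric.mem_ball_self (lt_min hr hr'),
    hsub, D, rfl, ?_, B, ?_⟩
  · intro l hl i s hs
    have h1 := hD l hl.le
    rw [show ⌊k⌋₊ - l.length = (⌊k⌋₊ - l.length - 1) + 1 by omega] at h1
    exact hasLineDerivAt_iff_tendsto_slope_zero.1
      ((h1.1 s (hsub hs)).hasFDerivAt.hasLineDerivAt (cdir i))
  · intro l hl
    have hCB : C l ≤ B := hB ⟨l, hl, rfl⟩
    refine ⟨fun s hs => ((hev (x := (s, s)) ⟨hsub' hs, hsub' hs⟩ l hl).1).trans hCB,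
      fun s hs t ht => ((hev (x := (s, t)) ⟨hsub' hs, hsub' ht⟩ l hl).2).trans ?_⟩
    gcongr

/-! ### Products and cutoffs -/

lemma HolAt.mul {α : ℝ} (hα : 0 < α) {φ ψ : ℂ → ℝ} {z : ℂ} (h : HolAt α φ z) (h' : HolAt α ψ z) :
    HolAt α (fun z => φ z * ψ z) z := by
  have hb1 : (fun p : ℂ × ℂ => φ p.1) =O[𝓝 (z, z)] fun _ => (1 : ℝ) :=
    (ContinuousAt.comp (g := φ) (f := Prod.fst) (x := (z, z)) (h.continuousAt hα)
      continuousAt_fst).isBigO_one ℝ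
  have hb2 : (fun p : ℂ × ℂ => ψ p.2) =O[𝓝 (z, z)] fun _ => (1 : ℝ) :=
    (ContinuousAt.comp (g := ψ) (f := Prod.snd) (x := (z, z)) (h'.continuousAt hα)
      continuousAt_snd).isBigO_one ℝ
  have h1 := (hb1.mul h').congr_right (g₂ := fun p => dist p.1 p.2 ^ α) (by simp)
  have h2 := (hb2.mul h).congr_right (g₂ := fun p => dist p.1 p.2 ^ α) (by simp)
  refine (Asymptotics.IsBigO.add h1 h2).congr_left fun p => ?_
  ring

lemma eventually_zero_of_notMem {χ : ℂ → ℝ} {U : Set ℂ} (hs : tsupport χ ⊆ U) {z : ℂ}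
    (hz : z ∉ U) : χ =ᶠ[𝓝 z] 0 :=
  notMem_tsupport_iff_eventuallyEq.1 fun h => hz (hs h)

/-- Multiplying by a smooth function supported in `U` extends local regularity on `U` to the whole
plane, whatever the values of `g` off `U`. -/
lemma HolC.cutoff {α : ℝ} (hα : 0 < α) (hα1 : α ≤ 1) {U : Set ℂ} (hU : IsOpen U) {n : ℕ} :
    ∀ {g χ : ℂ → ℝ}, HolC α U n g → ContDiff ℝ (⊤ : ℕ∞) χ → tsupport χ ⊆ U →
      HolC α Set.univ n (fun z => χ z * g z) := by
  induction n with
  | zero =>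
    intro g χ hg hχ hs z _
    by_cases hz : z ∈ U
    · exact (ContDiffAt.holAt hα1 (hχ.of_le (by simp)).contDiffAt).mul hα (hg z hz)
    · have h0 := eventually_zero_of_notMem hs hz
      refine HolAt.congr (φ := fun _ => 0) (by simp [HolAt, Asymptotics.isBigO_zero]) ?_
      filter_upwards [h0] with w hw
      simp [hw]
  | succ n ih =>
    intro g χ hg hχ hs
    have hχd : Differentiable ℝ χ := hχ.differentiable (by simp)
    have h0 : ∀ z ∉ U, (fun z => χ z * g z) =ᶠ[𝓝 z] fun _ => 0 := by
      intro z hz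
      filter_upwards [eventually_zero_of_notMem hs hz] with w hw
      simp [hw]
    refine ⟨fun z _ => ?_, fun i => ?_⟩
    · by_cases hz : z ∈ U
      · exact (hχd z).mul (hg.1 z hz)
      · exact (differentiableAt_const 0).congr_of_eventuallyEq (h0 z hz)
    · have hχi : ContDiff ℝ (⊤ : ℕ∞) (pd i χ) :=
        (hχ.fderiv_right (by simp)).clm_apply contDiff_const
      have hsi : tsupport (pd i χ) ⊆ U := by
        refine (closure_mono fun z hz => ?_).trans ((tsupport_fderiv_subset ℝ).trans hs)
        intro h
        apply hz
        simp [pd, h]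
      refine ((ih (hg.pred hα hα1 hU) hχi hsi).add isOpen_univ (ih (hg.2 i) hχ hs)).congr
        isOpen_univ fun z _ => ?_
      by_cases hz : z ∈ U
      · simp [pd, fderiv_fun_mul (hχd z) (hg.1 z hz)]
        ring
      · have h1 := (eventually_zero_of_notMem hs hz).self_of_nhds
        have h2 := (eventually_zero_of_notMem hsi hz).self_of_nhds
        rw [pd_congr (h0 z hz), h1, h2]
        simp [pd]

/-! ### A weakly singular kernel -/

section

open MeasureTheory

lemma locInt_inv : LocallyIntegrable (fun t : ℂ => t⁻¹) := by
  refine locallyIntegrable_of_norm_le_rpow (C := 1) (α := 1) (by simp) (by simp) ?_ ?_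
  · refine Eventually.of_forall fun x => ?_
    simp [Real.rpow_neg_one]
  · exact (measurable_inv (G := ℂ)).aestronglyMeasurable

lemma locInt_rpow {α : ℝ} (hα : 0 < α) : LocallyIntegrable (fun t : ℂ => ‖t‖ ^ (α - 2)) := by
  refine locallyIntegrable_of_norm_le_rpow (C := 1) (α := 2 - α) (by simp) (by simpa using hα) ?_ ?_
  · refine Eventually.of_forall fun x => ?_
    rw [Real.norm_of_nonneg (by positivity), one_mul, neg_sub]
  · exact (measurable_norm.pow_const _).aestronglyMeasurable

/-- The kernel `|s|^{α-2} |h+s|⁻¹`, which controls the second-order remainder of the Cauchy kernel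
against a function of size `|s|^α`. -/
def rker (α : ℝ) (h s : ℂ) : ℝ := ‖s‖ ^ (α - 2) * ‖h + s‖⁻¹

lemma rker_nonneg (α : ℝ) (h s : ℂ) : 0 ≤ rker α h s := by unfold rker; positivity

lemma measurable_rker (α : ℝ) (h : ℂ) : Measurable (rker α h) := by
  unfold rker
  exact (measurable_norm.pow_const _).mul (by fun_prop)

/-- The singularities of the kernel at `0` and `-e` are integrable since `α - 2 > -2` and `-1 > -2`,
and it decays like `|s|^{α-3}`, with `α - 3 < -2`. The three majorants cover these three regions. -/
lemma rker_unit {α : ℝ} (hα : 0 < α) (hα1 : α < 1) : ∃ J : ℝ, ∀ e : ℂ, ‖e‖ = 1 →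
    Integrable (rker α e) ∧ ∫ s, rker α e s ≤ J := by
  set b1 : ℂ → ℝ := (Metric.ball (0 : ℂ) (1/2)).indicator (fun s => 2 * ‖s‖ ^ (α - 2)) with hb1
  set b2 : ℂ → ℝ := fun s => 8 * (1 + ‖s‖) ^ (-(3 - α)) with hb2
  set b3 : ℂ → ℝ := (Metric.ball (0 : ℂ) 4).indicator (fun s => 4 * ‖s‖⁻¹) with hb3
  have i1 : Integrable b1 := by
    refine IntegrableOn.integrable_indicator ?_ measurableSet_ball
    exact (((locInt_rpow hα).integrableOn_isCompact
      (isCompact_closedBall (0 : ℂ) (1/2))).mono_set Metric.ball_subset_closedBall).const_mul 2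
  have i2 : Integrable b2 := (integrable_one_add_norm (by simp; linarith)).const_mul 8
  have i3 : Integrable b3 := by
    refine IntegrableOn.integrable_indicator ?_ measurableSet_ball
    have := ((locInt_inv.integrableOn_isCompact
      (isCompact_closedBall (0 : ℂ) 4)).mono_set Metric.ball_subset_closedBall).norm.const_mul 4
    simpa [IntegrableOn] using this
  have n1 : ∀ s, 0 ≤ b1 s := fun s => Set.indicator_nonneg (fun _ _ => by positivity) s
  have n2 : ∀ s, 0 ≤ b2 s := fun s => by simp only [hb2]; positivity
  have n3 : ∀ s, 0 ≤ b3 s := fun s => Set.indicator_nonneg (fun _ _ => by positivity) s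
  refine ⟨(∫ s, b1 s) + (∫ s, b2 s) + ∫ s, b3 s, fun e he => ?_⟩
  have hle : ∀ s, rker α e s ≤ b1 s + b2 s + b3 (e + s) := by
    intro s
    have ht1 : ‖s‖ ≤ ‖e + s‖ + 1 := by
      have := norm_sub_le (e + s) e
      simp only [add_sub_cancel_left, he] at this
      exact this
    have ht2 : 1 ≤ ‖e + s‖ + ‖s‖ := by
      have := norm_sub_le (e + s) s
      simp only [add_sub_cancel_right, he] at this
      exact this
    rcases lt_or_ge ‖s‖ (1/2) with h1 | h1
    · have : b1 s = 2 * ‖s‖ ^ (α - 2) := by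
        rw [hb1, Set.indicator_of_mem (by simpa using h1)]
      have h2 : rker α e s ≤ b1 s := by
        rw [this, rker, mul_comm]
        gcongr
        rw [inv_le_comm₀ (by linarith) (by norm_num)]
        linarith
      linarith [n2 s, n3 (e + s)]
    rcases lt_or_ge 2 ‖s‖ with h2 | h2
    · have h3 : rker α e s ≤ b2 s := by
        have hs : 0 < ‖s‖ := by linarith
        have a1 : ‖e + s‖⁻¹ ≤ 2 * ‖s‖⁻¹ := by
          rw [inv_le_comm₀ (by linarith) (by positivity), mul_inv, inv_inv]
          linarith
        have a2 : ‖s‖ ^ (-(3 - α)) ≤ ((1 + ‖s‖) * (2/3)) ^ (-(3 - α)) :=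
          Real.rpow_le_rpow_of_nonpos (by positivity) (by linarith) (by linarith)
        have a3 : ((2 : ℝ)/3) ^ (-(3 - α)) ≤ 4 := by
          calc ((2 : ℝ)/3) ^ (-(3 - α)) ≤ (2/3) ^ (-3 : ℝ) :=
                Real.rpow_le_rpow_of_exponent_ge (by norm_num) (by norm_num) (by linarith)
            _ ≤ 4 := by
              rw [Real.rpow_neg (by norm_num)]
              norm_num
        calc rker α e s ≤ ‖s‖ ^ (α - 2) * (2 * ‖s‖⁻¹) := by unfold rker; gcongr
          _ = 2 * ‖s‖ ^ (-(3 - α)) := by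
            rw [show -(3 - α) = (α - 2) - 1 by ring, Real.rpow_sub_one hs.ne']; ring
          _ ≤ 2 * ((1 + ‖s‖) ^ (-(3 - α)) * 4) := by
            rw [Real.mul_rpow (by positivity) (by norm_num)] at a2
            gcongr
            exact a2.trans (by gcongr)
          _ = b2 s := by simp only [hb2]; ring
      linarith [n1 s, n3 (e + s)]
    · have hmem : e + s ∈ Metric.ball (0 : ℂ) 4 := by
        have := norm_add_le e s
        rw [mem_ball_zero_iff]; linarith
      have : b3 (e + s) = 4 * ‖e + s‖⁻¹ := by rw [hb3, Set.indicator_of_mem hmem]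
      have h3 : rker α e s ≤ b3 (e + s) := by
        rw [this, rker]
        gcongr
        calc ‖s‖ ^ (α - 2) ≤ (1/2) ^ (α - 2) :=
              Real.rpow_le_rpow_of_nonpos (by norm_num) h1 (by linarith)
          _ ≤ (1/2) ^ (-2 : ℝ) :=
              Real.rpow_le_rpow_of_exponent_ge (by norm_num) (by norm_num) (by linarith)
          _ = 4 := by rw [Real.rpow_neg (by norm_num)]; norm_num
      linarith [n1 s, n2 s]
  have i3' : Integrable fun s => b3 (e + s) := i3.comp_add_left e
  have ib := (i1.add i2).add i3'
  have ik : Integrable (rker α e) := by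
    refine ib.mono' (measurable_rker α e).aestronglyMeasurable (Eventually.of_forall fun s => ?_)
    rw [Real.norm_of_nonneg (rker_nonneg _ _ _)]
    exact hle s
  refine ⟨ik, ?_⟩
  calc ∫ s, rker α e s ≤ ∫ s, (b1 s + b2 s + b3 (e + s)) := integral_mono ik ib hle
    _ = _ := by
      have e1 : ∫ s, (b1 s + b2 s + b3 (e + s)) = (∫ s, (b1 s + b2 s)) + ∫ s, b3 (e + s) :=
        integral_add (i1.add i2) i3'
      rw [e1, integral_add i1 i2, integral_add_left_eq_self b3 e]

/-- Scaling `s = |h| s'` reduces the kernel bound to `|h| = 1`. -/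
lemma rker_bound {α : ℝ} (hα : 0 < α) (hα1 : α < 1) : ∃ J : ℝ, 0 ≤ J ∧ ∀ h : ℂ, h ≠ 0 →
    Integrable (rker α h) ∧ ∫ s, rker α h s ≤ J * ‖h‖ ^ (α - 1) := by
  obtain ⟨J, hJ⟩ := rker_unit hα hα1
  have hJ0 : 0 ≤ J := (integral_nonneg (rker_nonneg α 1)).trans (hJ 1 (by simp)).2
  refine ⟨J, hJ0, fun h hh => ?_⟩
  have hr : 0 < ‖h‖ := norm_pos_iff.2 hh
  set r := ‖h‖ with hrdef
  set e : ℂ := r⁻¹ • h with hedef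
  have he : ‖e‖ = 1 := by
    rw [hedef, norm_smul, norm_inv, Real.norm_of_nonneg hr.le, ← hrdef, inv_mul_cancel₀ hr.ne']
  have hre : h = r • e := by rw [hedef, smul_smul, mul_inv_cancel₀ hr.ne', one_smul]
  have hsc : ∀ s : ℂ, rker α h (r • s) = r ^ (α - 3) * rker α e s := by
    intro s
    have : h + r • s = r • (e + s) := by rw [smul_add, ← hre]
    rw [rker, rker, this, norm_smul, norm_smul, Real.norm_of_nonneg hr.le,
      Real.mul_rpow hr.le (norm_nonneg _), show α - 3 = (α - 2) - 1 by ring,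
      Real.rpow_sub_one hr.ne', mul_inv]
    ring
  have hint : Integrable fun s => rker α h (r • s) := by
    simp only [hsc]
    exact (hJ e he).1.const_mul _
  refine ⟨(integrable_comp_smul_iff volume (rker α h) hr.ne').1 hint, ?_⟩
  have h1 := Measure.integral_comp_smul volume (rker α h) r
  simp only [hsc, integral_const_mul, Complex.finrank_real_complex, smul_eq_mul] at h1
  rw [abs_of_nonneg (by positivity)] at h1
  have h2 : ∫ s, rker α h s = r ^ 2 * (r ^ (α - 3) * ∫ s, rker α e s) := by
    rw [h1]; field_simp
  have h3 : r ^ 2 * r ^ (α - 3) = r ^ (α - 1) := by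
    rw [← Real.rpow_natCast, ← Real.rpow_add hr]; congr 1; push_cast; ring
  rw [h2, ← mul_assoc, h3, mul_comm]
  gcongr
  exact (hJ e he).2

/-! ### The Cauchy transform -/

/-- The Cauchy transform `z ↦ ∫ G(z - t) / t dt`, without the usual factor `1/π`. -/
def cau (G : ℂ → ℂ) : ℂ → ℂ :=
  convolution (fun t : ℂ => t⁻¹) G (ContinuousLinearMap.mul ℝ ℂ) volume

lemma cau_apply (G : ℂ → ℂ) (z : ℂ) : cau G z = ∫ t, t⁻¹ * G (z - t) := rfl

lemma cau_shift (G : ℂ → ℂ) (z h : ℂ) : cau G (z + h) = ∫ s, (h + s)⁻¹ * G (z - s) := by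
  rw [cau_apply, ← integral_add_left_eq_self (fun t => t⁻¹ * G (z + h - t)) h]
  simp only [add_comm z h, add_sub_add_left_eq_sub]

lemma integrable_inv_mul {F : ℂ → ℂ} (hF : Continuous F) (hFc : HasCompactSupport F) (h : ℂ) :
    Integrable fun s => (h + s)⁻¹ * F s := by
  have hc : HasCompactSupport fun t => F (t - h) := by
    simpa [sub_eq_add_neg, Function.comp_def] using hFc.comp_homeomorph (Homeomorph.addRight (-h))
  have h1 : Integrable fun t : ℂ => F (t - h) • t⁻¹ :=
    locInt_inv.integrable_smul_left_of_hasCompactSupport (by fun_prop) hc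
  have h2 := h1.comp_add_left h
  simpa [mul_comm] using h2

lemma integrable_sq_mul {F : ℂ → ℂ} (hF : Continuous F) (hFc : HasCompactSupport F) {M α : ℝ}
    (hα : 0 < α) (hM : ∀ s, ‖F s‖ ≤ M * ‖s‖ ^ α) :
    Integrable fun s => (s⁻¹) ^ 2 * F s := by
  have hmeas : AEStronglyMeasurable (fun s : ℂ => (s⁻¹) ^ 2 * F s) :=
    (((measurable_inv (G := ℂ)).pow_const 2).mul hF.measurable).aestronglyMeasurable
  have hon : IntegrableOn (fun s => (s⁻¹) ^ 2 * F s) (tsupport F) := by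
    refine (((locInt_rpow hα).integrableOn_isCompact hFc.isCompact).const_mul M).mono'
      hmeas.restrict (Eventually.of_forall fun s => ?_)
    rcases eq_or_ne s 0 with rfl | hs
    · have h0 : 0 ≤ M := by simpa using (norm_nonneg _).trans (hM 1)
      simp only [inv_zero, ne_eq, OfNat.ofNat_ne_zero, not_false_eq_true, zero_pow, zero_mul,
        norm_zero]
      positivity
    · have hs' : 0 < ‖s‖ := norm_pos_iff.2 hs
      rw [norm_mul, norm_pow, norm_inv, Real.rpow_sub hs', show (2 : ℝ) = ((2 : ℕ) : ℝ) by norm_num,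
        Real.rpow_natCast]
      calc ‖s‖⁻¹ ^ 2 * ‖F s‖ ≤ ‖s‖⁻¹ ^ 2 * (M * ‖s‖ ^ α) := by gcongr; exact hM s
        _ = _ := by field_simp
  refine (integrableOn_iff_integrable_of_support_subset fun s hs => ?_).1 hon
  apply subset_tsupport
  intro h
  exact hs (by simp [h])

/-- First-order Taylor expansion at `0` of the Cauchy transform of a density that vanishes like
`|s|^α` at the point of expansion. The derivative may be taken under the integral, and the constant
`M * J` does not depend on the support of `F`. -/
lemma taylor_core {α : ℝ} (hα : 0 < α) (hα1 : α < 1) : ∃ J : ℝ, 0 ≤ J ∧ ∀ (F : ℂ → ℂ) (M : ℝ),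
    Continuous F → HasCompactSupport F → (∀ s, ‖F s‖ ≤ M * ‖s‖ ^ α) → ∃ B : ℂ, ∀ h : ℂ,
      ‖(∫ s, (h + s)⁻¹ * F s) - (∫ s, s⁻¹ * F s) - B * h‖ ≤ M * J * ‖h‖ ^ (1 + α) := by
  obtain ⟨J, hJ0, hJ⟩ := rker_bound hα hα1
  refine ⟨J, hJ0, fun F M hF hFc hM => ⟨-∫ s, (s⁻¹) ^ 2 * F s, fun h => ?_⟩⟩
  have hM0 : 0 ≤ M := by
    have := (norm_nonneg _).trans (hM 1)
    simpa using this
  rcases eq_or_ne h 0 with rfl | hh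
  · simp only [zero_add, sub_self, mul_zero, norm_zero]; positivity
  have hr : 0 < ‖h‖ := norm_pos_iff.2 hh
  have i1 := integrable_inv_mul hF hFc h
  have i2 : Integrable fun s => s⁻¹ * F s := by simpa using integrable_inv_mul hF hFc 0
  have i3 := integrable_sq_mul hF hFc hα hM
  have e1 : (∫ s, (h + s)⁻¹ * F s) - (∫ s, s⁻¹ * F s) - (-∫ s, (s⁻¹) ^ 2 * F s) * h
      = ∫ s, ((h + s)⁻¹ * F s - s⁻¹ * F s + (s⁻¹) ^ 2 * F s * h) := by
    have e2 : ∫ s, ((h + s)⁻¹ * F s - s⁻¹ * F s + (s⁻¹) ^ 2 * F s * h)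
        = (∫ s, ((h + s)⁻¹ * F s - s⁻¹ * F s)) + ∫ s, (s⁻¹) ^ 2 * F s * h :=
      integral_add (i1.sub i2) (i3.mul_const h)
    rw [e2, integral_sub i1 i2, integral_mul_const]
    ring
  rw [e1]
  have hae : ∀ᵐ s : ℂ, s ≠ 0 ∧ h + s ≠ 0 := by
    have h1 : ∀ᵐ s : ℂ, s ≠ 0 := by simp [ae_iff]
    have h2 : ∀ᵐ s : ℂ, s ≠ -h := by simp [ae_iff]
    filter_upwards [h1, h2] with s hs hs'
    exact ⟨hs, fun h0 => hs' (by linear_combination h0)⟩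
  calc _ ≤ ∫ s, M * ‖h‖ ^ 2 * rker α h s := by
        refine norm_integral_le_of_norm_le ((hJ h hh).1.const_mul _) ?_
        filter_upwards [hae] with s ⟨hs, hhs⟩
        have hs' : 0 < ‖s‖ := norm_pos_iff.2 hs
        -- Exact second-order remainder of `h ↦ (h + s)⁻¹`, valid for all `s ≠ 0, -h`.
        have hid : (h + s)⁻¹ * F s - s⁻¹ * F s + (s⁻¹) ^ 2 * F s * h
            = h ^ 2 * (s⁻¹) ^ 2 * (h + s)⁻¹ * F s := by
          field_simp
          ring
        rw [hid, norm_mul, norm_mul, norm_mul, norm_pow, norm_pow, norm_inv, norm_inv, rker,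
          Real.rpow_sub hs', show (2 : ℝ) = ((2 : ℕ) : ℝ) by norm_num, Real.rpow_natCast]
        calc ‖h‖ ^ 2 * ‖s‖⁻¹ ^ 2 * ‖h + s‖⁻¹ * ‖F s‖
            ≤ ‖h‖ ^ 2 * ‖s‖⁻¹ ^ 2 * ‖h + s‖⁻¹ * (M * ‖s‖ ^ α) := by gcongr; exact hM s
          _ = _ := by field_simp
    _ = M * ‖h‖ ^ 2 * ∫ s, rker α h s := integral_const_mul _ _
    _ ≤ M * ‖h‖ ^ 2 * (J * ‖h‖ ^ (α - 1)) := by gcongr; exact (hJ h hh).2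
    _ = M * J * ‖h‖ ^ (1 + α) := by
      have : ‖h‖ ^ 2 * ‖h‖ ^ (α - 1) = ‖h‖ ^ (1 + α) := by
        rw [← Real.rpow_natCast, ← Real.rpow_add hr]; congr 1; push_cast; ring
      rw [← this]; ring

lemma taylor_smooth {X : ℂ → ℂ} (hX : ContDiff ℝ 2 X) : ∃ C : ℝ, 0 ≤ C ∧ ∀ h : ℂ, ‖h‖ ≤ 1 →
    ‖X h - X 0 - fderiv ℝ X 0 h‖ ≤ C * ‖h‖ ^ 2 := by
  have h1 : ContDiff ℝ 1 (fderiv ℝ X) := hX.fderiv_right (by norm_num)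
  obtain ⟨K, hK⟩ := h1.contDiffOn.exists_lipschitzOnWith one_ne_zero
    (convex_closedBall (0 : ℂ) 1) (isCompact_closedBall (0 : ℂ) 1)
  refine ⟨K, K.2, fun h hh => ?_⟩
  have hsub : Metric.closedBall (0 : ℂ) ‖h‖ ⊆ Metric.closedBall (0 : ℂ) 1 :=
    Metric.closedBall_subset_closedBall hh
  have := (convex_closedBall (0 : ℂ) ‖h‖).norm_image_sub_le_of_norm_fderiv_le' (𝕜 := ℝ) (f := X)
    (φ := fderiv ℝ X 0) (C := K * ‖h‖) (x := 0) (y := h)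
    (fun x _ => hX.differentiable (by norm_num) x) ?_ (by simp) (by simp)
  · rw [sub_zero] at this
    rw [sq, ← mul_assoc]; exact this
  · intro x hx
    have h2 := hK.dist_le_mul x (hsub hx) 0 (by simp)
    rw [dist_eq_norm, dist_zero_right] at h2
    refine h2.trans ?_
    gcongr
    simpa using hx

/-! ### The operator `dbar` and the normalizing constant -/

/-- `∂/∂σ + i ∂/∂t`, twice the usual operator `∂/∂z̄`. -/
def dbar (φ : ℂ → ℂ) (z : ℂ) : ℂ := pd 0 φ z + Complex.I * pd 1 φ z

lemma pd_cau {G : ℂ → ℂ} (hG : ContDiff ℝ 1 G) (hc : HasCompactSupport G) (i : Fin 2) :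
    pd i (cau G) = cau (pd i G) := by
  funext z
  rw [pd, cau, (hc.hasFDerivAt_convolution_right _ locInt_inv hG z).fderiv]
  rw [convolution_precompR_apply _ locInt_inv (hc.fderiv ℝ) (hG.continuous_fderiv one_ne_zero)]
  rfl

lemma cau_contDiff {G : ℂ → ℂ} {n : ℕ∞} (hG : ContDiff ℝ n G) (hc : HasCompactSupport G) :
    ContDiff ℝ n (cau G) :=
  hc.contDiff_convolution_right _ locInt_inv hG

lemma cau_differentiable {G : ℂ → ℂ} (hG : ContDiff ℝ 1 G) (hc : HasCompactSupport G) :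
    Differentiable ℝ (cau G) := fun z =>
  (hc.hasFDerivAt_convolution_right _ locInt_inv hG z).differentiableAt

/-- A smooth decreasing profile, equal to `1` on `(-∞, 1]` and to `0` on `[2, ∞)`. -/
def prof (x : ℝ) : ℝ := Real.smoothTransition (2 - x)

/-- A radial smooth compactly supported function with value `1` at the origin, written through
`|z|²` so that `dbar` of it is explicit. -/
def bmp (z : ℂ) : ℂ := (prof (z.re ^ 2 + z.im ^ 2) : ℝ)

lemma prof_contDiff : ContDiff ℝ (⊤ : ℕ∞) prof :=
  Real.smoothTransition.contDiff.comp (contDiff_const.sub contDiff_id)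

lemma prof_antitone : Antitone prof := fun x y h =>
  Real.smoothTransition.monotone (by linarith)

lemma prof_zero : prof 0 = 1 := by simp [prof]

lemma prof_eq_zero {x : ℝ} (h : 2 ≤ x) : prof x = 0 :=
  Real.smoothTransition.zero_of_nonpos (by linarith)

lemma bmp_contDiff : ContDiff ℝ (⊤ : ℕ∞) bmp := by
  refine Complex.ofRealCLM.contDiff.comp (prof_contDiff.comp ?_)
  exact (Complex.reCLM.contDiff.pow 2).add (Complex.imCLM.contDiff.pow 2)

lemma bmp_zero : bmp 0 = 1 := by simp [bmp, prof_zero]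

lemma bmp_hasCompactSupport : HasCompactSupport bmp := by
  refine HasCompactSupport.of_support_subset_isCompact (isCompact_closedBall (0 : ℂ) 2)
    fun z hz => ?_
  by_contra h
  apply hz
  rw [mem_closedBall_zero_iff, not_le] at h
  have : 2 ≤ z.re ^ 2 + z.im ^ 2 := by
    have := Complex.sq_norm z
    rw [Complex.normSq_apply] at this
    nlinarith
  simp [bmp, prof_eq_zero this]

lemma hasFDerivAt_bmp (z : ℂ) : HasFDerivAt bmp
    (Complex.ofRealCLM.comp (deriv prof (z.re ^ 2 + z.im ^ 2) •
      ((2 * z.re) • Complex.reCLM + (2 * z.im) • Complex.imCLM))) z := by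
  have h1 : HasFDerivAt (fun z : ℂ => z.re ^ 2 + z.im ^ 2)
      ((2 * z.re) • Complex.reCLM + (2 * z.im) • Complex.imCLM) z := by
    have := (Complex.reCLM.hasFDerivAt (x := z).pow 2).fun_add
      (Complex.imCLM.hasFDerivAt (x := z).pow 2)
    simpa using this
  have h2 : HasDerivAt prof (deriv prof (z.re ^ 2 + z.im ^ 2)) (z.re ^ 2 + z.im ^ 2) :=
    (prof_contDiff.differentiable (by simp) _).hasDerivAt
  have h3 := HasDerivAt.comp_hasFDerivAt (h₂ := prof) (f := fun z : ℂ => z.re ^ 2 + z.im ^ 2) z h2 h1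
  exact (Complex.ofRealCLM.hasFDerivAt (x := prof (z.re ^ 2 + z.im ^ 2))).comp z h3

lemma dbar_bmp (z : ℂ) : dbar bmp z = 2 * deriv prof (z.re ^ 2 + z.im ^ 2) * z := by
  have hz := Complex.re_add_im z
  simp only [dbar, pd, (hasFDerivAt_bmp z).fderiv, cdir]
  simp
  linear_combination (2 * ((deriv prof (z.re ^ 2 + z.im ^ 2) : ℝ) : ℂ)) * hz

/-- The constant in `dbar (cau G) = cst * G`. Its value is `2π`, but only `cst ≠ 0` matters, so it is
left as the value obtained from one particular function `G` with `G 0 = 1`. -/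
def cst : ℂ := dbar (cau bmp) 0

/-- Differentiating under the integral, `cst` is the integral of `-2 * prof'(|t|²)`, which is
nonnegative and not identically zero. -/
lemma cst_ne_zero : cst ≠ 0 := by
  have hb1 : ContDiff ℝ 1 bmp := bmp_contDiff.of_le (by simp)
  have hc : ∀ i, Continuous (pd i bmp) := fun i =>
    (hb1.continuous_fderiv one_ne_zero).clm_apply continuous_const
  have hcs : ∀ i, HasCompactSupport (pd i bmp) := fun i =>
    bmp_hasCompactSupport.fderiv_apply ℝ (cdir i)
  have hi : ∀ i, Integrable fun t : ℂ => t⁻¹ * pd i bmp (0 - t) := fun i => by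
    have := integrable_inv_mul (F := fun t => pd i bmp (0 - t)) ((hc i).comp (by fun_prop))
      ((hcs i).comp_homeomorph (Homeomorph.subLeft 0)) 0
    simpa using this
  set q : ℂ → ℝ := fun t => -2 * deriv prof (t.re ^ 2 + t.im ^ 2) with hq
  have hdc : Continuous (deriv prof) := prof_contDiff.continuous_deriv (by simp)
  have h1 : cst = ∫ t : ℂ, ((q t : ℝ) : ℂ) := by
    have : cst = (∫ t : ℂ, t⁻¹ * pd 0 bmp (0 - t)) + ∫ t : ℂ, Complex.I * (t⁻¹ * pd 1 bmp (0 - t)) := by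
      rw [cst, dbar, pd_cau hb1 bmp_hasCompactSupport, pd_cau hb1 bmp_hasCompactSupport,
        cau_apply, cau_apply, integral_const_mul]
    rw [this, ← integral_add (hi 0) ((hi 1).const_mul _)]
    have hae : ∀ᵐ s : ℂ, s ≠ 0 := by simp [ae_iff]
    refine integral_congr_ae ?_
    filter_upwards [hae] with t ht
    have h2 : t⁻¹ * pd 0 bmp (0 - t) + Complex.I * (t⁻¹ * pd 1 bmp (0 - t))
        = t⁻¹ * dbar bmp (0 - t) := by rw [dbar]; ring
    rw [h2, dbar_bmp, hq]
    simp only [zero_sub, Complex.neg_re, Complex.neg_im, neg_sq]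
    push_cast
    field_simp
  rw [h1, integral_complex_ofReal]
  obtain ⟨x, hx, hx'⟩ := exists_deriv_eq_slope prof (by norm_num : (0 : ℝ) < 2)
    prof_contDiff.continuous.continuousOn (prof_contDiff.differentiable (by simp)).differentiableOn
  have hpos : 0 < ∫ t, q t := by
    refine Continuous.integral_pos_of_hasCompactSupport_nonneg_nonzero (x := (Real.sqrt x : ℂ))
      ?_ ?_ ?_ ?_
    · exact continuous_const.mul (hdc.comp (by fun_prop))
    · refine HasCompactSupport.of_support_subset_isCompact (isCompact_closedBall (0 : ℂ) 2)
        fun z hz => ?_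
      by_contra h
      apply hz
      rw [mem_closedBall_zero_iff, not_le] at h
      have h3 : 2 < z.re ^ 2 + z.im ^ 2 := by
        have := Complex.sq_norm z
        rw [Complex.normSq_apply] at this
        nlinarith
      have : prof =ᶠ[𝓝 (z.re ^ 2 + z.im ^ 2)] fun _ => 0 := by
        filter_upwards [lt_mem_nhds h3] with y hy
        exact prof_eq_zero hy.le
      simp [hq, this.deriv_eq]
    · intro t
      have := prof_antitone.deriv_nonpos (x := t.re ^ 2 + t.im ^ 2)
      simp only [hq, Pi.zero_apply]
      linarith
    · simp only [hq, Complex.ofReal_re, Complex.ofReal_im, Real.sq_sqrt hx.1.le]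
      norm_num [hx', prof_zero, prof_eq_zero]
  exact_mod_cast hpos.ne'

/-- A locally Hölder function with compact support is globally Hölder, by compactness of a large
bidisc; far-apart pairs of points are handled by boundedness. -/
lemma global_holder {α : ℝ} (hα : 0 < α) {G : ℂ → ℂ} (hG : ∀ z, HolAt α G z)
    (hc : HasCompactSupport G) :
    ∃ M : ℝ, 0 ≤ M ∧ ∀ x y, ‖G x - G y‖ ≤ M * dist x y ^ α := by
  have hcont : Continuous G := continuous_iff_continuousAt.2 fun z => (hG z).continuousAt hα
  obtain ⟨S, hS⟩ := hc.exists_bound_of_continuous hcont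
  have hS0 : 0 ≤ S := (norm_nonneg _).trans (hS 0)
  obtain ⟨R, hR⟩ := hc.isCompact.isBounded.subset_closedBall (0 : ℂ)
  have hcomp : IsCompact (Metric.closedBall (0 : ℂ) (R + 1) ×ˢ Metric.closedBall (0 : ℂ) (R + 1)) :=
    (isCompact_closedBall _ _).prod (isCompact_closedBall _ _)
  obtain ⟨M, hM0, hM⟩ : ∃ M : ℝ, 0 ≤ M ∧ ∀ p ∈ Metric.closedBall (0 : ℂ) (R + 1) ×ˢ
      Metric.closedBall (0 : ℂ) (R + 1), ‖G p.1 - G p.2‖ ≤ M * dist p.1 p.2 ^ α := by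
    refine hcomp.induction_on (p := fun s => ∃ M : ℝ, 0 ≤ M ∧ ∀ p ∈ s,
      ‖G p.1 - G p.2‖ ≤ M * dist p.1 p.2 ^ α) ⟨0, le_rfl, by simp⟩ ?_ ?_ ?_
    · rintro s t hst ⟨M, h0, hM⟩
      exact ⟨M, h0, fun p hp => hM p (hst hp)⟩
    · rintro s t ⟨M, h0, hM⟩ ⟨M', h0', hM'⟩
      refine ⟨M + M', by positivity, fun p hp => ?_⟩
      rcases hp with hp | hp
      · exact (hM p hp).trans (by gcongr; linarith)
      · exact (hM' p hp).trans (by gcongr; linarith)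
    · rintro ⟨x, y⟩ -
      suffices h : ∃ M : ℝ, 0 ≤ M ∧ ∀ᶠ p : ℂ × ℂ in 𝓝 (x, y),
          ‖G p.1 - G p.2‖ ≤ M * dist p.1 p.2 ^ α by
        obtain ⟨M, h0, hM⟩ := h
        exact ⟨_, mem_nhdsWithin_of_mem_nhds hM, M, h0, fun p hp => hp⟩
      rcases eq_or_ne x y with rfl | hxy
      · obtain ⟨M, hM0, hM⟩ := Asymptotics.IsBigO.exists_nonneg (hG x)
        refine ⟨M, hM0, ?_⟩
        filter_upwards [hM.bound] with p hp
        rwa [Real.norm_of_nonneg (by positivity)] at hp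
      · have hd : 0 < dist x y ^ α := Real.rpow_pos_of_pos (dist_pos.2 hxy) _
        have c2 : ContinuousAt (fun p : ℂ × ℂ => dist p.1 p.2 ^ α) (x, y) :=
          ContinuousAt.rpow_const (by fun_prop) (Or.inr hα.le)
        refine ⟨2 * S / (dist x y ^ α / 2), by positivity, ?_⟩
        filter_upwards [c2.eventually_const_lt (half_lt_self hd)] with p hp
        calc ‖G p.1 - G p.2‖ ≤ 2 * S := by
              linarith [norm_sub_le (G p.1) (G p.2), hS p.1, hS p.2]
          _ = 2 * S / (dist x y ^ α / 2) * (dist x y ^ α / 2) := by field_simp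
          _ ≤ _ := by gcongr
  refine ⟨M + 2 * S, by positivity, fun x y => ?_⟩
  have hd0 : 0 ≤ dist x y ^ α := by positivity
  rcases le_or_gt 1 (dist x y) with h1 | h1
  · have h2 : 1 ≤ dist x y ^ α := Real.one_le_rpow h1 hα.le
    have := norm_sub_le (G x) (G y)
    nlinarith [hS x, hS y, mul_nonneg hM0 hd0]
  · have hout : ∀ w : ℂ, R < ‖w‖ → G w = 0 := fun w hw =>
      image_eq_zero_of_notMem_tsupport fun h => by
        have := hR h
        rw [mem_closedBall_zero_iff] at this
        linarith
    rw [dist_eq_norm] at h1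
    have hxy := norm_sub_norm_le x y
    have hyx := norm_sub_norm_le y x
    rw [norm_sub_rev] at hyx
    by_cases hx : ‖x‖ ≤ R + 1 ∧ ‖y‖ ≤ R + 1
    · have := hM (x, y) ⟨by simpa using hx.1, by simpa using hx.2⟩
      nlinarith [mul_nonneg hS0 hd0]
    · have : R < ‖x‖ ∧ R < ‖y‖ := by
        by_cases hx1 : ‖x‖ ≤ R + 1
        · have : R + 1 < ‖y‖ := not_le.1 fun h => hx ⟨hx1, h⟩
          exact ⟨by linarith, by linarith⟩
        · exact ⟨by linarith, by linarith⟩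
      rw [hout x this.1, hout y this.2, sub_zero, norm_zero]
      positivity

/-! ### Schauder estimates for the Cauchy transform -/

/-- The uniform first-order Taylor expansion of the Cauchy transform of a Hölder density. At the point
`z` the density is split as `G z` times a fixed smooth bump centred at `z`, plus a part vanishing like
`|s|^α`. The second part contributes a complex-linear derivative, so `dbar` only sees the first. -/
lemma cau_taylor {α : ℝ} (hα : 0 < α) (hα1 : α < 1) {G : ℂ → ℂ} (hG : ∀ z, HolAt α G z)
    (hc : HasCompactSupport G) : ∃ C : ℝ, 0 ≤ C ∧ ∃ L : ℂ → ℂ →L[ℝ] ℂ, ∀ z,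
      L z 1 + Complex.I * L z Complex.I = cst * G z ∧ ∀ h : ℂ, ‖h‖ ≤ 1 →
      ‖cau G (z + h) - cau G z - L z h‖ ≤ C * ‖h‖ ^ (1 + α) := by
  have hcont : Continuous G := continuous_iff_continuousAt.2 fun z => (hG z).continuousAt hα
  obtain ⟨S, hS⟩ := hc.exists_bound_of_continuous hcont
  have hS0 : 0 ≤ S := (norm_nonneg _).trans (hS 0)
  obtain ⟨M, hM0, hM⟩ := global_holder hα hG hc
  have hb1 : ContDiff ℝ 1 bmp := bmp_contDiff.of_le (by simp)
  obtain ⟨N, hN0, hN⟩ := global_holder hα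
    (fun z => ContDiffAt.holAt hα1.le hb1.contDiffAt) bmp_hasCompactSupport
  have hX : ContDiff ℝ 2 (cau bmp) :=
    cau_contDiff (n := 2) (bmp_contDiff.of_le (by exact_mod_cast le_top)) bmp_hasCompactSupport
  obtain ⟨J, hJ0, hJ⟩ := taylor_core hα hα1
  obtain ⟨C, hC0, hC⟩ := taylor_smooth hX
  have key : ∀ z : ℂ, ∃ B : ℂ, ∀ h : ℂ,
      ‖(cau G (z + h) - G z * cau bmp h) - (cau G z - G z * cau bmp 0) - B * h‖
        ≤ ((M + S * N) * J) * ‖h‖ ^ (1 + α) := by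
    intro z
    have c1 : Continuous fun s => G (z - s) := hcont.comp (by fun_prop)
    have c2 : Continuous fun s : ℂ => bmp (0 - s) := bmp_contDiff.continuous.comp (by fun_prop)
    have k1 : HasCompactSupport fun s => G (z - s) := hc.comp_homeomorph (Homeomorph.subLeft z)
    have k2 : HasCompactSupport fun s : ℂ => bmp (0 - s) :=
      bmp_hasCompactSupport.comp_homeomorph (Homeomorph.subLeft 0)
    have hrep : ∀ h, ∫ s, (h + s)⁻¹ * (G (z - s) - G z * bmp (0 - s))
        = cau G (z + h) - G z * cau bmp h := by
      intro h
      have e2 := cau_shift bmp 0 h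
      rw [zero_add] at e2
      rw [cau_shift, e2, ← integral_const_mul, ← integral_sub (integrable_inv_mul c1 k1 h)
        ((integrable_inv_mul c2 k2 h).const_mul _)]
      exact integral_congr_ae (Eventually.of_forall fun s => by ring)
    obtain ⟨B, hB⟩ := hJ (fun s => G (z - s) - G z * bmp (0 - s)) (M + S * N)
      (c1.sub (continuous_const.mul c2)) (k1.sub (k2.mul_left (f := fun _ => G z))) (by
        intro s
        have e1 : G (z - s) - G z * bmp (0 - s)
            = (G (z - s) - G z) - G z * (bmp (0 - s) - bmp 0) := by rw [bmp_zero]; ring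
        have e2 := hM (z - s) z
        have e3 := hN (0 - s) 0
        rw [dist_eq_norm] at e2 e3
        simp only [sub_sub_cancel_left, sub_zero, zero_sub, norm_neg] at e2 e3
        simp only [zero_sub] at e1 ⊢
        rw [e1]
        refine (norm_sub_le _ _).trans ?_
        rw [norm_mul, add_mul, mul_assoc]
        exact add_le_add e2 (mul_le_mul (hS z) e3 (norm_nonneg _) hS0))
    refine ⟨B, fun h => ?_⟩
    have h0 := hrep 0
    simp only [zero_add, add_zero] at h0
    rw [← hrep h, ← h0]
    exact hB h
  choose B hB using key
  refine ⟨(M + S * N) * J + S * C, by positivity, fun z =>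
    (ContinuousLinearMap.mul ℝ ℂ (B z)) + (ContinuousLinearMap.mul ℝ ℂ (G z)).comp
      (fderiv ℝ (cau bmp) 0), fun z => ⟨?_, fun h hh => ?_⟩⟩
  · have : cst = fderiv ℝ (cau bmp) 0 1 + Complex.I * fderiv ℝ (cau bmp) 0 Complex.I := by
      simp [cst, dbar, pd, cdir]
    rw [this]
    simp only [add_apply, ContinuousLinearMap.mul_apply',
      ContinuousLinearMap.comp_apply]
    linear_combination (B z) * Complex.I_mul_I
  · have e : cau G (z + h) - cau G z - ((ContinuousLinearMap.mul ℝ ℂ (B z)) +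
        (ContinuousLinearMap.mul ℝ ℂ (G z)).comp (fderiv ℝ (cau bmp) 0)) h
        = ((cau G (z + h) - G z * cau bmp h) - (cau G z - G z * cau bmp 0) - B z * h)
          + G z * (cau bmp h - cau bmp 0 - fderiv ℝ (cau bmp) 0 h) := by
      simp only [add_apply, ContinuousLinearMap.mul_apply',
        ContinuousLinearMap.comp_apply]
      ring
    rw [e]
    refine (norm_add_le _ _).trans ?_
    rw [add_mul, norm_mul, mul_assoc S C]
    have hp : ‖h‖ ^ (2 : ℕ) ≤ ‖h‖ ^ (1 + α) := by
      rcases eq_or_lt_of_le (norm_nonneg h) with h0 | h0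
      · rw [← h0]; simp; positivity
      · rw [← Real.rpow_natCast]
        exact Real.rpow_le_rpow_of_exponent_ge h0 hh (by push_cast; linarith)
    refine add_le_add (hB z h) (mul_le_mul (hS z) ?_ (norm_nonneg _) hS0)
    exact (hC h hh).trans (by gcongr)

lemma hasFDerivAt_of_taylor {α C : ℝ} (hα : 0 < α) {W : ℂ → ℂ} {z : ℂ} {L : ℂ →L[ℝ] ℂ}
    (h : ∀ h : ℂ, ‖h‖ ≤ 1 → ‖W (z + h) - W z - L h‖ ≤ C * ‖h‖ ^ (1 + α)) :
    HasFDerivAt W L z := by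
  rw [hasFDerivAt_iff_isLittleO_nhds_zero]
  have h1 : (fun h => W (z + h) - W z - L h) =O[𝓝 0] fun h : ℂ => ‖h‖ ^ (1 + α) := by
    refine Asymptotics.IsBigO.of_bound C ?_
    filter_upwards [Metric.closedBall_mem_nhds (0 : ℂ) one_pos] with x hx
    rw [Real.norm_of_nonneg (by positivity)]
    exact h x (by simpa using hx)
  refine h1.trans_isLittleO ?_
  rw [← Asymptotics.isLittleO_norm_right]
  have h2 : (fun h : ℂ => ‖h‖ ^ α) =o[𝓝 0] fun _ => (1 : ℝ) := by
    rw [Asymptotics.isLittleO_one_iff]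
    have : ContinuousAt (fun h : ℂ => ‖h‖ ^ α) 0 :=
      ContinuousAt.rpow_const (by fun_prop) (Or.inr hα.le)
    have h4 : Tendsto (fun h : ℂ => ‖h‖ ^ α) (𝓝 0) (𝓝 (‖(0 : ℂ)‖ ^ α)) := this
    simpa [Real.zero_rpow hα.ne'] using h4
  refine ((Asymptotics.isBigO_refl (fun h : ℂ => ‖h‖) (𝓝 0)).mul_isLittleO h2).congr_left ?_ |>.congr_right ?_
  · intro x
    rcases eq_or_ne x 0 with rfl | hx
    · simp [Real.zero_rpow (by linarith : (1 + α) ≠ 0)]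
    · rw [Real.rpow_add (norm_pos_iff.2 hx), Real.rpow_one]
  · simp

/-- A first-order Taylor expansion with a remainder of order `1 + α`, uniform in the base point, forces
the derivative to be `α`-Hölder. -/
lemma holAt_of_taylor {α C : ℝ} (hα : 0 < α) (hα1 : α < 1) (hC0 : 0 ≤ C) {W : ℂ → ℂ}
    {L : ℂ → ℂ →L[ℝ] ℂ}
    (h : ∀ z h : ℂ, ‖h‖ ≤ 1 → ‖W (z + h) - W z - L z h‖ ≤ C * ‖h‖ ^ (1 + α))
    (i : Fin 2) (z : ℂ) : HolAt α (fun z => L z (cdir i)) z := by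
  have he : ‖cdir i‖ = 1 := by fin_cases i <;> simp [cdir]
  refine Asymptotics.IsBigO.of_bound (6 * C) ?_
  have hd : ContinuousAt (fun p : ℂ × ℂ => dist p.1 p.2) (z, z) := by fun_prop
  filter_upwards [hd.eventually_lt_const (show dist (z, z).1 (z, z).2 < 1 / 2 by simp)] with p hp
  obtain ⟨x, y⟩ := p
  simp only at hp ⊢
  rw [Real.norm_of_nonneg (by positivity)]
  rcases eq_or_ne x y with rfl | hxy
  · simp; positivity
  set d := dist x y with hdd
  have hd0 : 0 < d := dist_pos.2 hxy
  have hdn : ‖x - y‖ = d := (dist_eq_norm x y).symm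
  have hh : ‖d • cdir i‖ = d := by rw [norm_smul, he, mul_one, Real.norm_of_nonneg hd0.le]
  have hs : ‖x - y + d • cdir i‖ ≤ 2 * d := (norm_add_le _ _).trans (by rw [hdn, hh]; linarith)
  have r1 := h x (d • cdir i) (by rw [hh]; linarith)
  have r2 := h y (x - y + d • cdir i) (hs.trans (by linarith))
  have r3 := h y (x - y) (by rw [hdn]; linarith)
  rw [hh] at r1
  rw [hdn] at r3
  have r2' : C * ‖x - y + d • cdir i‖ ^ (1 + α) ≤ 4 * C * d ^ (1 + α) := by
    have a1 : ‖x - y + d • cdir i‖ ^ (1 + α) ≤ (2 * d) ^ (1 + α) := by gcongr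
    have a2 : (2 : ℝ) ^ (1 + α) ≤ 4 := by
      calc (2 : ℝ) ^ (1 + α) ≤ 2 ^ (2 : ℝ) :=
            Real.rpow_le_rpow_of_exponent_le (by norm_num) (by linarith)
        _ = 4 := by norm_num
    rw [Real.mul_rpow (by norm_num) hd0.le] at a1
    calc C * ‖x - y + d • cdir i‖ ^ (1 + α) ≤ C * (4 * d ^ (1 + α)) := by
          gcongr
          exact a1.trans (by gcongr)
      _ = 4 * C * d ^ (1 + α) := by ring
  -- Expand `W (x + d • cdir i)` around `x`, and around `y` with increments `x - y + d • cdir i`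
  -- and `x - y`; the linear terms differ by `d • (L x - L y) (cdir i)`.
  have e : d • (L x (cdir i) - L y (cdir i)) =
      (W (y + (x - y + d • cdir i)) - W y - L y (x - y + d • cdir i))
      - (W (y + (x - y)) - W y - L y (x - y)) - (W (x + d • cdir i) - W x - L x (d • cdir i)) := by
    have b1 : y + (x - y + d • cdir i) = x + d • cdir i := by ring
    have b2 : y + (x - y) = x := by ring
    rw [b1, b2, map_add, map_smul, map_smul, smul_sub]
    ring
  have f : d * ‖L x (cdir i) - L y (cdir i)‖ ≤ 6 * C * d ^ (1 + α) := by
    rw [← Real.norm_of_nonneg hd0.le, ← norm_smul, e, Real.norm_of_nonneg hd0.le]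
    refine (norm_sub_le _ _).trans ?_
    have := norm_sub_le (W (y + (x - y + d • cdir i)) - W y - L y (x - y + d • cdir i))
      (W (y + (x - y)) - W y - L y (x - y))
    linarith
  rw [Real.rpow_add hd0, Real.rpow_one] at f
  exact le_of_mul_le_mul_left (by linarith) hd0

/-- The lowest-order case of the gain of one derivative, with the equation for `dbar`. -/
lemma cau_base {α : ℝ} (hα : 0 < α) (hα1 : α < 1) {G : ℂ → ℂ} (hG : ∀ z, HolAt α G z)
    (hc : HasCompactSupport G) :
    HolC α Set.univ 1 (cau G) ∧ ∀ z, dbar (cau G) z = cst * G z := by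
  obtain ⟨C, hC0, L, hL⟩ := cau_taylor hα hα1 hG hc
  have hd : ∀ z, HasFDerivAt (cau G) (L z) z := fun z => hasFDerivAt_of_taylor hα (hL z).2
  have hp : ∀ i z, pd i (cau G) z = L z (cdir i) := fun i z => by rw [pd, (hd z).fderiv]
  refine ⟨⟨fun z _ => (hd z).differentiableAt, fun i z _ => ?_⟩, fun z => ?_⟩
  · rw [show pd i (cau G) = fun z => L z (cdir i) from funext (hp i)]
    exact holAt_of_taylor hα hα1 hC0 (fun z => (hL z).2) i z
  · rw [dbar, hp, hp]
    simpa [cdir] using (hL z).1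

/-- Schauder estimate for the Cauchy transform: it gains one derivative. -/
lemma cau_holC {α : ℝ} (hα : 0 < α) (hα1 : α < 1) {n : ℕ} : ∀ {G : ℂ → ℂ},
    HolC α Set.univ n G → HasCompactSupport G → HolC α Set.univ (n + 1) (cau G) := by
  induction n with
  | zero => exact fun hG hc => (cau_base hα hα1 (fun z => hG z trivial) hc).1
  | succ n ih =>
    intro G hG hc
    have h1 : ContDiff ℝ 1 G := by
      rw [← contDiffOn_univ]
      exact (hG.contDiffOn hα isOpen_univ).of_le (by push_cast; exact le_add_self)
    refine ⟨fun z _ => cau_differentiable h1 hc z, fun i => ?_⟩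
    rw [pd_cau h1 hc]
    exact ih (hG.2 i) (hc.fderiv_apply ℝ (cdir i))

lemma dbar_cau {α : ℝ} (hα : 0 < α) (hα1 : α < 1) {n : ℕ} {G : ℂ → ℂ}
    (hG : HolC α Set.univ n G) (hc : HasCompactSupport G) (z : ℂ) :
    dbar (cau G) z = cst * G z :=
  (cau_base hα hα1 (fun z => hG.le hα hα1.le isOpen_univ (Nat.zero_le n) z trivial) hc).2 z

/-! ### Removability of the real axis -/

/-- The Cauchy-Riemann equations. -/
lemma dbar_eq_zero_iff {v : ℂ → ℂ} {z : ℂ} (hd : DifferentiableAt ℝ v z) :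
    dbar v z = 0 ↔ DifferentiableAt ℂ v z := by
  rw [differentiableAt_complex_iff_differentiableAt_real, dbar, pd, pd]
  simp only [cdir, Matrix.cons_val_zero, Matrix.cons_val_one, hd, true_and, smul_eq_mul]
  constructor <;> intro h
  · linear_combination (-Complex.I) * h + fderiv ℝ v z Complex.I * Complex.I_mul_I
  · rw [h]
    linear_combination fderiv ℝ v z 1 * Complex.I_mul_I

/-- Cauchy's theorem on a rectangle whose interior avoids the real axis. -/
lemma rect_aux {v : ℂ → ℂ} {a b s t : ℝ}
    (hc : ContinuousOn v (Set.uIcc a b ×ℂ Set.uIcc s t))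
    (hd : ∀ z ∈ Set.uIcc a b ×ℂ Set.uIcc s t, z ∉ realAxis → DifferentiableAt ℂ v z)
    (hst : 0 ∉ Set.Ioo (min s t) (max s t)) :
    (∫ x : ℝ in a..b, v (x + s * Complex.I)) - (∫ x : ℝ in a..b, v (x + t * Complex.I)) +
      Complex.I • (∫ y : ℝ in s..t, v (b + y * Complex.I)) -
      Complex.I • (∫ y : ℝ in s..t, v (a + y * Complex.I)) = 0 := by
  have := Complex.integral_boundary_rect_eq_zero_of_continuousOn_of_differentiableOn v
    ⟨a, s⟩ ⟨b, t⟩ hc (fun z hz => DifferentiableAt.differentiableWithinAt (hd z ?_ ?_))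
  · exact this
  · exact ⟨Set.Ioo_subset_Icc_self hz.1, Set.Ioo_subset_Icc_self hz.2⟩
  · intro h
    have h2 : z.im ∈ Set.Ioo (min s t) (max s t) := hz.2
    rw [show z.im = 0 from h] at h2
    exact hst h2

/-- A line is removable for continuous functions: holomorphy off the real axis and continuity imply
holomorphy. By Morera it suffices to treat rectangles, and one that crosses the axis is cut along
it. -/
lemma differentiableOn_of_off_realAxis {c : ℂ} {r : ℝ} {v : ℂ → ℂ}
    (hc : ContinuousOn v (Metric.ball c r))
    (hd : ∀ z ∈ Metric.ball c r, z ∉ realAxis → DifferentiableAt ℂ v z) :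
    DifferentiableOn ℂ v (Metric.ball c r) := by
  refine Complex.IsExactOn.differentiableOn Metric.isOpen_ball
    (Complex.IsConservativeOn.isExactOn_ball hc ?_)
  intro z w hzw
  rw [← add_eq_zero_iff_eq_neg, Complex.wedgeIntegral_add_wedgeIntegral_eq]
  have hzw' : Set.uIcc z.re w.re ×ℂ Set.uIcc z.im w.im ⊆ Metric.ball c r := hzw
  by_cases h0 : (0 : ℝ) ∈ Set.Ioo (min z.im w.im) (max z.im w.im)
  · have h0' : (0 : ℝ) ∈ Set.uIcc z.im w.im := Set.Ioo_subset_Icc_self h0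
    have s1 : Set.uIcc z.re w.re ×ℂ Set.uIcc z.im 0 ⊆ Metric.ball c r :=
      fun _ h => hzw' ⟨h.1, Set.uIcc_subset_uIcc_left h0' h.2⟩
    have s2 : Set.uIcc z.re w.re ×ℂ Set.uIcc 0 w.im ⊆ Metric.ball c r :=
      fun _ h => hzw' ⟨h.1, Set.uIcc_subset_uIcc_right h0' h.2⟩
    have r1 := rect_aux (hc.mono s1) (fun z hz => hd z (s1 hz)) (by
      rintro ⟨h1, h2⟩
      rcases le_total z.im 0 with h | h <;> simp [h] at h1 h2)
    have r2 := rect_aux (hc.mono s2) (fun z hz => hd z (s2 hz)) (by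
      rintro ⟨h1, h2⟩
      rcases le_total w.im 0 with h | h <;> simp [h] at h1 h2)
    have hint : ∀ a ∈ Set.uIcc z.re w.re, ∀ s t : ℝ, Set.uIcc s t ⊆ Set.uIcc z.im w.im →
        IntervalIntegrable (fun y : ℝ => v (a + y * Complex.I)) volume s t := by
      intro a ha s t hst
      refine ContinuousOn.intervalIntegrable (hc.comp (by fun_prop) fun y hy => hzw' ?_)
      exact ⟨by simpa using ha, by simpa using hst hy⟩
    have e : ∀ a ∈ Set.uIcc z.re w.re, (∫ y : ℝ in z.im..w.im, v (a + y * Complex.I)) =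
        (∫ y : ℝ in z.im..0, v (a + y * Complex.I))
          + ∫ y : ℝ in (0 : ℝ)..w.im, v (a + y * Complex.I) := fun a ha =>
      (intervalIntegral.integral_add_adjacent_intervals
        (hint a ha _ _ (Set.uIcc_subset_uIcc_left h0'))
        (hint a ha _ _ (Set.uIcc_subset_uIcc_right h0'))).symm
    rw [e _ Set.left_mem_uIcc, e _ Set.right_mem_uIcc]
    simp only [smul_eq_mul] at r1 r2 ⊢
    linear_combination r1 + r2
  · exact rect_aux (hc.mono hzw') (fun z hz => hd z (hzw' hz)) h0

/-! ### The gradient and the Poisson equation -/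

/-- `∂f/∂σ - i ∂f/∂t`, twice the usual operator `∂f/∂z`. -/
def grd (f : ℂ → ℝ) (z : ℂ) : ℂ :=
  ((pd 0 f z : ℝ) : ℂ) - Complex.I * ((pd 1 f z : ℝ) : ℂ)

lemma grd_differentiableAt {f : ℂ → ℝ} {z : ℂ} (h0 : DifferentiableAt ℝ (pd 0 f) z)
    (h1 : DifferentiableAt ℝ (pd 1 f) z) : DifferentiableAt ℝ (grd f) z :=
  (Complex.ofRealCLM.differentiableAt.comp z h0).sub
    ((Complex.ofRealCLM.differentiableAt.comp z h1).const_mul _)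

/-- `dbar (grd f)` is the Laplacian, up to an imaginary part that vanishes when the second derivative
is symmetric. -/
lemma dbar_grd {f : ℂ → ℝ} {z : ℂ} (h0 : DifferentiableAt ℝ (pd 0 f) z)
    (h1 : DifferentiableAt ℝ (pd 1 f) z) : dbar (grd f) z =
      (lapl f z : ℂ) + Complex.I * ((fderiv ℝ (pd 0 f) z Complex.I - fderiv ℝ (pd 1 f) z 1 : ℝ) : ℂ) := by
  have e : HasFDerivAt (grd f) (Complex.ofRealCLM.comp (fderiv ℝ (pd 0 f) z) -
      Complex.I • Complex.ofRealCLM.comp (fderiv ℝ (pd 1 f) z)) z :=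
    (Complex.ofRealCLM.hasFDerivAt.comp z h0.hasFDerivAt).sub
      ((Complex.ofRealCLM.hasFDerivAt.comp z h1.hasFDerivAt).const_mul Complex.I)
  have el : lapl f z = fderiv ℝ (pd 0 f) z 1 + fderiv ℝ (pd 1 f) z Complex.I := rfl
  rw [dbar, el]
  simp only [pd, e.fderiv, cdir]
  simp
  linear_combination (-((fderiv ℝ (pd 1 f) z Complex.I : ℝ) : ℂ)) * Complex.I_mul_I

lemma pd_symm {f : ℂ → ℝ} {z : ℂ} (h : ContDiffAt ℝ 2 f z) :
    fderiv ℝ (pd 0 f) z Complex.I = fderiv ℝ (pd 1 f) z 1 := by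
  have hs : IsSymmSndFDerivAt ℝ f z := h.isSymmSndFDerivAt (by simp)
  have hd : DifferentiableAt ℝ (fderiv ℝ f) z :=
    (h.fderiv_right (m := 1) (by norm_num)).differentiableAt one_ne_zero
  have e : ∀ i u, fderiv ℝ (pd i f) z u = fderiv ℝ (fderiv ℝ f) z u (cdir i) := by
    intro i u
    have := (hd.hasFDerivAt.clm_apply (hasFDerivAt_const (cdir i) z)).fderiv
    change fderiv ℝ (fun y => fderiv ℝ f y (cdir i)) z u = _
    rw [this]
    simp
  rw [e, e]
  exact hs.eq _ _

lemma pd_differentiableAt {f : ℂ → ℝ} {z : ℂ} (h : ContDiffAt ℝ 2 f z) (i : Fin 2) :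
    DifferentiableAt ℝ (pd i f) z :=
  ((h.fderiv_right (m := 1) (by norm_num)).differentiableAt one_ne_zero).clm_apply
    (differentiableAt_const _)

/-- Local solvability of `dbar W = g` with a gain of one derivative. -/
lemma exists_dbar_solution {α : ℝ} (hα : 0 < α) (hα1 : α < 1) {n : ℕ} {U : Set ℂ}
    (hU : IsOpen U) {g : ℂ → ℝ} (hg : HolC α U n g) {z₀ : ℂ} (hz₀ : z₀ ∈ U) :
    ∃ r > 0, Metric.ball z₀ r ⊆ U ∧ ∃ W : ℂ → ℂ, HolC α Set.univ (n + 1) W ∧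
      ∀ z ∈ Metric.ball z₀ r, dbar W z = g z := by
  obtain ⟨R, hR0, hR⟩ := Metric.isOpen_iff.1 hU z₀ hz₀
  let χ : ContDiffBump z₀ := ⟨R / 4, R / 2, by positivity, by linarith⟩
  have hχU : tsupport χ ⊆ U := by
    rw [χ.tsupport_eq]
    exact (Metric.closedBall_subset_ball (show R / 2 < R by linarith)).trans hR
  have h1 : HolC α Set.univ n (fun z => ((χ z * g z : ℝ) : ℂ)) :=
    (hg.cutoff hα hα1.le hU χ.contDiff hχU).clm isOpen_univ Complex.ofRealCLM
  have hc : HasCompactSupport (fun z => ((χ z * g z : ℝ) : ℂ)) :=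
    (χ.hasCompactSupport.mul_right (f' := g)).comp_left (g := fun x : ℝ => (x : ℂ)) (by simp)
  refine ⟨R / 4, by positivity, (Metric.ball_subset_ball (by linarith)).trans hR,
    fun z => ContinuousLinearMap.mul ℝ ℂ cst⁻¹ (cau (fun z => ((χ z * g z : ℝ) : ℂ)) z),
    (cau_holC hα hα1 h1 hc).clm isOpen_univ _, fun z hz => ?_⟩
  have hd := (cau_holC hα hα1 h1 hc).1 z trivial
  have e := ((ContinuousLinearMap.mul ℝ ℂ cst⁻¹).hasFDerivAt.comp z hd.hasFDerivAt).fderiv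
  have e2 := dbar_cau hα hα1 h1 hc z
  rw [χ.one_of_mem_closedBall (Metric.ball_subset_closedBall hz), one_mul] at e2
  simp only [Function.comp_def] at e
  rw [dbar, pd, pd] at e2 ⊢
  rw [e]
  simp only [ContinuousLinearMap.comp_apply, ContinuousLinearMap.mul_apply']
  rw [mul_left_comm, ← mul_add, e2, inv_mul_cancel_left₀ cst_ne_zero]

/-- The theorem near one point: `grd f` minus a `C^{n+1+α}` solution `W` of `dbar W = g` is
holomorphic across the axis, so `grd f` is as regular as `W`. -/
lemma local_regularity {Ω : Set ℂ} (hΩ : IsOpen Ω) {f g : ℂ → ℝ}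
    (hf1 : ContDiffOn ℝ 1 f Ω) (hf2 : ContDiffOn ℝ 2 f (Ω \ realAxis))
    (hlap : ∀ z ∈ Ω \ realAxis, lapl f z = g z)
    {α : ℝ} (hα : 0 < α) (hα1 : α < 1) {n : ℕ} {U : Set ℂ}
    (hU : IsOpen U) (hUΩ : U ⊆ Ω) (hg : HolC α U n g) {z₀ : ℂ} (hz₀ : z₀ ∈ U) :
    ∃ r > 0, Metric.ball z₀ r ⊆ U ∧ HolC α (Metric.ball z₀ r) (n + 2) f ∧
      ∀ z ∈ Metric.ball z₀ r, lapl f z = g z := by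
  obtain ⟨r, hr0, hrU, W, hW, hWg⟩ := exists_dbar_solution hα hα1 hU hg hz₀
  have hB : IsOpen (Metric.ball z₀ r) := Metric.isOpen_ball
  have hrΩ := hrU.trans hUΩ
  have hax : IsOpen (Ω \ realAxis) :=
    hΩ.sdiff (isClosed_eq Complex.continuous_im continuous_const)
  have hpc : ∀ i, ContinuousOn (pd i f) (Metric.ball z₀ r) := fun i =>
    ((hf1.continuousOn_fderiv_of_isOpen hΩ le_rfl).mono hrΩ).clm_apply continuousOn_const
  have hgc : ContinuousOn (grd f) (Metric.ball z₀ r) :=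
    (Complex.continuous_ofReal.comp_continuousOn (hpc 0)).sub
      (continuousOn_const.mul (Complex.continuous_ofReal.comp_continuousOn (hpc 1)))
  have hWc : Continuous W := continuous_iff_continuousAt.2 fun z => (hW.1 z trivial).continuousAt
  have hdbar_sub : ∀ z, DifferentiableAt ℝ (grd f) z →
      dbar (fun z => grd f z - W z) z = dbar (grd f) z - dbar W z := by
    intro z hz
    simp only [dbar, pd, fderiv_fun_sub hz (hW.1 z trivial), sub_apply]
    ring
  have hv : DifferentiableOn ℂ (fun z => grd f z - W z) (Metric.ball z₀ r) := by
    refine differentiableOn_of_off_realAxis (hgc.sub hWc.continuousOn) fun z hz hza => ?_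
    have hC2 : ContDiffAt ℝ 2 f z := hf2.contDiffAt (hax.mem_nhds ⟨hrΩ hz, hza⟩)
    have h0 := pd_differentiableAt hC2 0
    have h1 := pd_differentiableAt hC2 1
    have hgd := grd_differentiableAt h0 h1
    rw [← dbar_eq_zero_iff (hgd.fun_sub (hW.1 z trivial)), hdbar_sub z hgd, dbar_grd h0 h1,
      pd_symm hC2, hWg z hz, hlap z ⟨hrΩ hz, hza⟩]
    simp
  have hvs : HolC α (Metric.ball z₀ r) (n + 1) (fun z => grd f z - W z) := by
    refine ContDiffOn.holC hα1.le hB ?_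
    exact ((hv.contDiffOn hB).restrict_scalars ℝ)
  have hgrd : HolC α (Metric.ball z₀ r) (n + 1) (grd f) :=
    (hvs.add hB (hW.mono (Set.subset_univ _))).congr hB fun z _ => by simp
  have hpd : ∀ i, HolC α (Metric.ball z₀ r) (n + 1) (pd i f) := by
    rw [Fin.forall_fin_two]
    constructor
    · exact (hgrd.clm hB Complex.reCLM).congr hB fun z _ => by simp [grd]
    · exact (hgrd.clm hB (-Complex.imCLM)).congr hB fun z _ => by simp [grd]
  have hfd : ∀ z ∈ Metric.ball z₀ r, DifferentiableAt ℝ f z := fun z hz =>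
    (hf1.contDiffAt (hΩ.mem_nhds (hrΩ hz))).differentiableAt one_ne_zero
  refine ⟨r, hr0, hrU, ⟨hfd, hpd⟩, fun z hz => ?_⟩
  have hgd := hgrd.1 z hz
  have h3 := (dbar_eq_zero_iff (hgd.fun_sub (hW.1 z trivial))).2
    (hv.differentiableAt (hB.mem_nhds hz))
  rw [hdbar_sub z hgd, hWg z hz, dbar_grd ((hpd 0).1 z hz) ((hpd 1).1 z hz)] at h3
  -- Symmetry of the second derivative is not needed here: the unwanted term is imaginary.
  have h4 := congrArg Complex.re h3
  simp at h4
  linarith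

end

/-- Lemma 2.2, scalar case: a `C¹` function on `Ω ⊆ ℂ` that is `C²` off the
real axis and satisfies `Δf = g ∈ C^k_loc` there is in fact `C^{k+2}_loc` on all of `Ω`,
and solves `Δf = g` everywhere. -/
theorem poisson_regularity_across_real_axis
    (Ω : Set ℂ) (hΩ : IsOpen Ω) (k : ℝ) (hk : 0 < k) (hknonint : ∀ n : ℕ, (n : ℝ) ≠ k)
    (f g : ℂ → ℝ)
    (hf1 : ContDiffOn ℝ 1 f Ω)
    (hg : MemCkLocC Ω k g)
    (hf2 : ContDiffOn ℝ 2 f (Ω \ realAxis))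
    (hlap : ∀ z ∈ Ω \ realAxis, lapl f z = g z) :
    MemCkLocC Ω (k + 2) f ∧ ContDiffOn ℝ 2 f Ω ∧ ∀ z ∈ Ω, lapl f z = g z := by
  have hα : 0 < k - ⌊k⌋₊ :=
    sub_pos.2 (lt_of_le_of_ne (Nat.floor_le hk.le) (hknonint _))
  have hα1 : k - ⌊k⌋₊ < 1 := by linarith [Nat.lt_floor_add_one k]
  have hfl : ⌊k + 2⌋₊ = ⌊k⌋₊ + 2 := Nat.floor_add_ofNat hk.le 2
  have hfr : k + 2 - ⌊k + 2⌋₊ = k - ⌊k⌋₊ := by rw [hfl]; push_cast; ring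
  have key : ∀ z₀ ∈ Ω, ∃ V : Set ℂ, IsOpen V ∧ z₀ ∈ V ∧ V ⊆ Ω ∧
      HolC (k - ⌊k⌋₊) V (⌊k⌋₊ + 2) f ∧ ∀ z ∈ V, lapl f z = g z := by
    intro z₀ hz₀
    obtain ⟨U, hU, hzU, hUΩ, hgU⟩ := hg z₀ hz₀
    obtain ⟨r, hr0, hrU, h1, h2⟩ := local_regularity hΩ hf1 hf2 hlap hα hα1 hU hUΩ
      (hgU.holC hU hα) hzU
    exact ⟨_, Metric.isOpen_ball, Metric.mem_ball_self hr0, hrU.trans hUΩ, h1, h2⟩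
  refine ⟨fun z₀ hz₀ => ?_, fun z₀ hz₀ => ?_, fun z₀ hz₀ => ?_⟩ <;>
    obtain ⟨V, hV, hzV, hVΩ, h1, h2⟩ := key z₀ hz₀
  · rw [← hfr, ← hfl] at h1
    obtain ⟨V', hV', hzV', hVV', h⟩ := h1.memCkC hV (hfr ▸ hα) (by rw [hfr]; exact hα1.le) hzV
    exact ⟨V', hV', hzV', hVV'.trans hVΩ, h⟩
  · exact (((h1.contDiffOn hα hV).of_le (by push_cast; exact le_add_self)).contDiffAt
      (hV.mem_nhds hzV)).contDiffWithinAt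
  · exact h2 z₀ hzV
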